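/- arXiv:2605.24507 — 2 statements merged into one kernel-verified Lean document; each statement's English description precedes it below -/
import Mathlib

section
/- Let n, q, r be positive integers and let n_1,…,n_q be nonnegative integers with n_1 + … + n_q = n. Then e_r(n_1,…,n_q) ≤ t_r(n,q), i.e., the elementary symmetric polynomial of degree r is maximized, among q-tuples of nonnegative integers summing to n, by a balanced tuple. -/
/-- The `i`-th balanced part size of a partition of `n` into `q` parts:
`⌊n/q⌋ + 1` for the first `n mod q` parts and `⌊n/q⌋` for the rest. -/
def balancedPart (n q : ℕ) (i : Fin q) : ℕ :=
  n / q + if (i : ℕ) < n % q then 1 else 0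

/-- `t_r(n,q) = ∑_{S ⊆ [q], |S| = r} ∏_{i ∈ S} n_i`, the number of edges of the
complete balanced `q`-partite `r`-graph on `n` vertices. -/
def turanNum (n q r : ℕ) : ℕ :=
  ∑ S ∈ (Finset.univ : Finset (Fin q)).powersetCard r, ∏ i ∈ S, balancedPart n q i

/-!
If two entries `x + 2 ≤ y` of a tuple are replaced by `x + 1` and `y - 1`, their sum is unchanged
and their product does not decrease. As `e_k` of the whole tuple is a combination of this sum and
this product with nonnegative coefficients depending only on the other entries, `e_k` does not
decrease either. Each such step lowers the sum of squares, so the process stops, and it can only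
stop at a tuple whose entries pairwise differ by at most one. Up to order there is exactly one such
tuple with given length and sum.
-/

open Multiset

section Esymm

variable {R : Type*} [CommSemiring R]

theorem esymm_zero (s : Multiset R) : s.esymm 0 = 1 := by
  simp [esymm]

theorem esymm_cons_succ (a : R) (s : Multiset R) (k : ℕ) :
    (a ::ₘ s).esymm (k + 1) = s.esymm (k + 1) + a * s.esymm k := by
  simp only [esymm, powersetCard_cons, Multiset.map_add, sum_add, Multiset.map_map,
    Function.comp_def, prod_cons, sum_map_mul_left]

theorem esymm_cons_cons_one (a b : R) (s : Multiset R) :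
    (a ::ₘ b ::ₘ s).esymm 1 = s.esymm 1 + (a + b) := by
  simp only [esymm_cons_succ _ _ 0, esymm_zero]
  ring

theorem esymm_cons_cons_add_two (a b : R) (s : Multiset R) (k : ℕ) :
    (a ::ₘ b ::ₘ s).esymm (k + 2) =
      s.esymm (k + 2) + (a + b) * s.esymm (k + 1) + a * b * s.esymm k := by
  simp only [esymm_cons_succ]
  ring

variable [PartialOrder R] [IsOrderedRing R]

theorem esymm_nonneg {s : Multiset R} (hs : ∀ x ∈ s, 0 ≤ x) (k : ℕ) : 0 ≤ s.esymm k := by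
  refine sum_nonneg fun p hp => ?_
  obtain ⟨u, hu, rfl⟩ := mem_map.1 hp
  exact prod_nonneg fun x hx => hs x (mem_of_le (mem_powersetCard.1 hu).1 hx)

theorem esymm_cons_cons_le_of_add_eq_of_mul_le {a b c d : R} {s : Multiset R}
    (hs : ∀ x ∈ s, 0 ≤ x) (hadd : a + b = c + d) (hmul : a * b ≤ c * d) :
    ∀ k, (a ::ₘ b ::ₘ s).esymm k ≤ (c ::ₘ d ::ₘ s).esymm k
  | 0 => by simp only [esymm_zero, le_refl]
  | 1 => by simp only [esymm_cons_cons_one, hadd, le_refl]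
  | k + 2 => by
    rw [esymm_cons_cons_add_two, esymm_cons_cons_add_two, hadd]
    gcongr
    exact esymm_nonneg hs k

end Esymm

/-- A multiset of natural numbers is balanced if its entries pairwise differ by at most one. This is
`Set.EquitableOn` for the entries of the multiset. -/
def IsBalanced (s : Multiset ℕ) : Prop :=
  {x | x ∈ s}.EquitableOn id

theorem isBalanced_map_iff {ι : Type*} {s : Finset ι} {f : ι → ℕ} :
    IsBalanced (s.val.map f) ↔ (s : Set ι).EquitableOn f := by
  refine ⟨fun h i j hi hj => h (mem_map_of_mem f hi) (mem_map_of_mem f hj), fun h x y hx hy => ?_⟩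
  obtain ⟨i, hi, rfl⟩ := mem_map.1 hx
  obtain ⟨j, hj, rfl⟩ := mem_map.1 hy
  exact h hi hj

theorem IsBalanced.eq_sum_div_card_or_eq_add_one {s : Multiset ℕ} (hs : IsBalanced s) {x : ℕ}
    (hx : x ∈ s) : x = s.sum / s.card ∨ x = s.sum / s.card + 1 := by
  have hequitable : (s.toEnumFinset : Set (ℕ × ℕ)).EquitableOn Prod.fst := by
    rwa [← isBalanced_map_iff, map_toEnumFinset_fst]
  have hsum : ∑ p ∈ s.toEnumFinset, p.1 = s.sum := by
    rw [Finset.sum, map_toEnumFinset_fst]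
  have hmem : (x, 0) ∈ s.toEnumFinset := by simpa [count_pos] using hx
  simpa only [hsum, card_toEnumFinset] using Finset.equitableOn_iff.1 hequitable _ hmem

theorem eq_replicate_add_replicate {α : Type*} [DecidableEq α] {s : Multiset α} {a b : α}
    (hab : a ≠ b) (hs : ∀ x ∈ s, x = a ∨ x = b) :
    s = replicate (s.count a) a + replicate (s.count b) b := by
  rw [← filter_eq', ← filter_eq', filter_add_filter, filter_eq_self.2 hs,
    filter_eq_nil.2 fun x _ hx => hab (hx.1.symm.trans hx.2), Multiset.add_zero]

theorem IsBalanced.eq_of_card_eq_of_sum_eq {s t : Multiset ℕ} (hs : IsBalanced s)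
    (ht : IsBalanced t) (hcard : s.card = t.card) (hsum : s.sum = t.sum) : s = t := by
  set m := t.sum / t.card
  have hs_eq : s = replicate (s.count m) m + replicate (s.count (m + 1)) (m + 1) :=
    eq_replicate_add_replicate m.lt_succ_self.ne fun x hx => by
      simpa only [hcard, hsum] using hs.eq_sum_div_card_or_eq_add_one hx
  have ht_eq : t = replicate (t.count m) m + replicate (t.count (m + 1)) (m + 1) :=
    eq_replicate_add_replicate m.lt_succ_self.ne fun x hx => ht.eq_sum_div_card_or_eq_add_one hx
  have hcount_add : s.count m + s.count (m + 1) = t.count m + t.count (m + 1) := by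
    rw [hs_eq, ht_eq] at hcard
    simpa only [card_add, card_replicate] using hcard
  have hcount_succ : s.count (m + 1) = t.count (m + 1) := by
    rw [hs_eq, ht_eq] at hsum
    simp only [sum_add, sum_replicate, smul_eq_mul] at hsum
    linear_combination hsum - m * hcount_add
  have hcount : s.count m = t.count m := by omega
  rw [hs_eq, ht_eq, hcount, hcount_succ]

theorem exists_esymm_le_of_not_isBalanced {s : Multiset ℕ} (hs : ¬IsBalanced s) :
    ∃ t : Multiset ℕ, t.card = s.card ∧ t.sum = s.sum ∧
      (t.map (· ^ 2)).sum < (s.map (· ^ 2)).sum ∧ ∀ k, s.esymm k ≤ t.esymm k := by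
  obtain ⟨y, hy, x, hx, hxy⟩ := Set.not_equitableOn.1 hs
  simp only [id] at hxy
  obtain ⟨d, rfl⟩ := Nat.exists_eq_add_of_lt hxy
  obtain ⟨u, rfl⟩ := exists_cons_of_mem hx
  obtain ⟨v, rfl⟩ := exists_cons_of_mem ((mem_cons.1 hy).resolve_left (by omega))
  refine ⟨(x + 1) ::ₘ (x + 1 + d) ::ₘ v, ?_, ?_, ?_, ?_⟩
  · simp only [card_cons]
  · simp only [sum_cons]
    omega
  · simp only [Multiset.map_cons, sum_cons]
    linarith
  · exact esymm_cons_cons_le_of_add_eq_of_mul_le (fun _ _ => Nat.zero_le _) (by ring) (by linarith)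

theorem IsBalanced.esymm_le {s t : Multiset ℕ} (ht : IsBalanced t) (hcard : s.card = t.card)
    (hsum : s.sum = t.sum) (k : ℕ) : s.esymm k ≤ t.esymm k := by
  induction s using (measure fun s : Multiset ℕ => (s.map (· ^ 2)).sum).wf.induction with | _ s ih
  by_cases hs : IsBalanced s
  · rw [hs.eq_of_card_eq_of_sum_eq ht hcard hsum]
  · obtain ⟨u, hu_card, hu_sum, hu_sq, hu_esymm⟩ := exists_esymm_le_of_not_isBalanced hs
    exact (hu_esymm k).trans (ih u hu_sq (hu_card.trans hcard) (hu_sum.trans hsum))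

theorem equitableOn_balancedPart (n q : ℕ) (s : Set (Fin q)) :
    s.EquitableOn (balancedPart n q) := by
  intro i j _ _
  unfold balancedPart
  grind

theorem sum_balancedPart (n : ℕ) {q : ℕ} (hq : 0 < q) : ∑ i, balancedPart n q i = n := by
  have hmod : n % q ≤ q := (Nat.mod_lt n hq).le
  simp only [balancedPart, Finset.sum_add_distrib, Finset.sum_const, Finset.card_univ,
    Fintype.card_fin, smul_eq_mul, Finset.sum_boole, Fin.card_filter_val_lt, min_eq_right hmod,
    Nat.cast_id, Nat.div_add_mod]

/-- among `q`-tuples of nonnegative integers summing to `n`, the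
elementary symmetric polynomial of degree `r` is maximized by the balanced tuple:
`e_r(n_1, …, n_q) ≤ t_r(n,q)`. -/
theorem esymm_le_turanNum (n q r : ℕ) (hn : 0 < n) (hq : 0 < q) (hr : 0 < r)
    (f : Fin q → ℕ) (hsum : ∑ i, f i = n) :
    ∑ S ∈ (Finset.univ : Finset (Fin q)).powersetCard r, ∏ i ∈ S, f i ≤ turanNum n q r := by
  rw [turanNum, ← Finset.esymm_map_val, ← Finset.esymm_map_val]
  have hbalanced : IsBalanced (Finset.univ.val.map (balancedPart n q)) :=
    isBalanced_map_iff.2 (equitableOn_balancedPart n q _)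
  refine hbalanced.esymm_le ?_ ?_ r
  · simp only [Multiset.card_map]
  · exact hsum.trans (sum_balancedPart n hq).symm
end

section
/- Let n, ℓ, r ≥ 2. Then ex(n, K_ℓ^{(r)}) = t_r(n, ℓ−1): the maximum number of edges of an r-uniform hypergraph on n vertices containing no member of Mubayi's family K_ℓ^{(r)} equals the number of edges of the complete balanced (ℓ−1)-partite r-graph on n vertices. -/
open MvPolynomial

/-- `H` is a copy of the hypergraph `H₀` inside the `r`-subsets of `[n]`: the image
of the edge set of `H₀` under a map injective on the vertex set of `H₀`. -/
def IsHypCopy {n : ℕ} (H₀ : Finset (Finset ℕ)) (H : Finset (Finset (Fin n))) : Prop :=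
  ∃ f : ℕ → Fin n, Set.InjOn f ↑(H₀.sup id) ∧ H = H₀.image (Finset.image f)

/-- `H₀` is a member of Mubayi's family `K_ℓ^{(r)}`: an `r`-uniform hypergraph with
at most `C(ℓ,2)` edges containing a core `S` of `ℓ` vertices every pair of which
lies in an edge. -/
def MubayiMember (ℓ r : ℕ) (H₀ : Finset (Finset ℕ)) : Prop :=
  (∀ e ∈ H₀, e.card = r) ∧ H₀.card ≤ Nat.choose ℓ 2 ∧
    ∃ S : Finset ℕ, S.card = ℓ ∧
      ∀ a ∈ S, ∀ b ∈ S, a ≠ b → ∃ e ∈ H₀, a ∈ e ∧ b ∈ e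

/-!
Two vertices are joined in the shadow graph of an `r`-graph when some edge contains both. The
`r`-graph contains a member of `K_ℓ^{(r)}` exactly when its shadow contains an `ℓ`-clique, and its
edges are `r`-cliques of the shadow, so the theorem reduces to Zykov's: with `q = ℓ - 1`, a
`K_{q+1}`-free graph on `n` vertices has at most `t_r(n, q)` cliques of size `r`, a bound attained
by the Turán graph.

For Zykov's theorem, add edges until the graph is maximal `K_{q+1}`-free; it then contains a
`q`-clique `A`. A `k`-clique outside `A` extends by vertices of `A` to at most
`(q - k).choose (r - k)` cliques of size `r`, so deleting `A` bounds the number of `r`-cliques by a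
recurrence in `n`, and the numbers `t_r(n, q)` satisfy this recurrence with equality.
-/

section TuranNumber

open Finset

theorem sum_powersetCard_prod_add_one {ι R : Type*} [CommSemiring R] (s : Finset ι) (f : ι → R)
    (r : ℕ) :
    ∑ S ∈ s.powersetCard r, ∏ i ∈ S, (f i + 1) =
      ∑ k ∈ range (r + 1),
        (∑ T ∈ s.powersetCard k, ∏ i ∈ T, f i) * ((#s - k).choose (r - k) : ℕ) := by
  classical
  calc ∑ S ∈ s.powersetCard r, ∏ i ∈ S, (f i + 1)
      = ∑ S ∈ s.powersetCard r, ∑ k ∈ range (r + 1), ∑ T ∈ S.powersetCard k, ∏ i ∈ T, f i :=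
        sum_congr rfl fun S hS ↦ by
          rw [prod_add_one, sum_powerset, (mem_powersetCard.1 hS).2]
    _ = ∑ k ∈ range (r + 1), ∑ T ∈ s.powersetCard k,
          ∑ _S ∈ (s.powersetCard r).filter (T ⊆ ·), ∏ i ∈ T, f i := by
        rw [sum_comm]
        refine sum_congr rfl fun k _ ↦ sum_comm' fun S T ↦ ?_
        simp only [mem_powersetCard, mem_filter]
        exact ⟨fun h ↦ ⟨⟨h.1, h.2.1⟩, h.2.1.trans h.1.1, h.2.2⟩, fun h ↦ ⟨h.1.1, h.1.2, h.2.2⟩⟩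
    _ = _ := by
        refine sum_congr rfl fun k hk ↦ ?_
        rw [sum_mul]
        refine sum_congr rfl fun T hT ↦ ?_
        obtain ⟨hTs, rfl⟩ := mem_powersetCard.1 hT
        rw [sum_const, card_filter_powersetCard_subset _ _ _ hTs (mem_range_succ_iff.1 hk),
          nsmul_eq_mul, mul_comm]

theorem balancedPart_eq_balancedPart_sub_add_one {n q : ℕ} (h : q ≤ n) (i : Fin q) :
    balancedPart n q i = balancedPart (n - q) q i + 1 := by
  obtain ⟨m, rfl⟩ := Nat.exists_eq_add_of_le h
  simp only [balancedPart, Nat.add_sub_cancel_left, Nat.add_mod_left, Nat.add_div_left _ i.pos]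
  omega

theorem turanNum_eq_sum_turanNum_sub {n q : ℕ} (h : q ≤ n) (r : ℕ) :
    turanNum n q r =
      ∑ k ∈ range (r + 1), turanNum (n - q) q k * (q - k).choose (r - k) := by
  simp_rw [turanNum, balancedPart_eq_balancedPart_sub_add_one h]
  simpa using sum_powersetCard_prod_add_one univ (balancedPart (n - q) q) r

theorem turanNum_of_lt {n q : ℕ} (h : n < q) (r : ℕ) : turanNum n q r = n.choose r := by
  have hpart (i : Fin q) : balancedPart n q i = if (i : ℕ) < n then 1 else 0 := by
    simp [balancedPart, Nat.div_eq_of_lt h, Nat.mod_eq_of_lt h]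
  have hfilter : (univ.powersetCard r).filter (fun S : Finset (Fin q) ↦ ∀ i ∈ S, (i : ℕ) < n) =
      (univ.filter fun i : Fin q ↦ (i : ℕ) < n).powersetCard r := by
    ext S
    simp [mem_powersetCard, subset_iff, and_comm]
  simp only [turanNum, hpart, prod_ite_zero, prod_const_one]
  rw [sum_boole, hfilter, card_powersetCard, Fin.card_filter_val_lt, min_eq_right h.le, Nat.cast_id]

end TuranNumber

section TuranGraph

open Finset SimpleGraph

section Coloring

variable {V ι : Type*} [DecidableEq ι]

theorem isNClique_comap_top_iff {c : V → ι} {r : ℕ} {e : Finset V} :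
    ((⊤ : SimpleGraph ι).comap c).IsNClique r e ↔ #e = r ∧ #(e.image c) = r := by
  have hclique : ((⊤ : SimpleGraph ι).comap c).IsClique e ↔ Set.InjOn c e := by
    simp only [isClique_iff, Set.Pairwise, Set.InjOn, comap_adj, top_adj]
    grind
  rw [isNClique_iff, hclique, ← card_image_iff]
  grind

variable [Fintype V]

theorem card_filter_image_eq (c : V → ι) (S : Finset ι) :
    #{e : Finset V | #e = #S ∧ e.image c = S} = ∏ i ∈ S, #{v | c v = i} := by
  classical
  rw [← prod_coe_sort, ← Fintype.card_piFinset]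
  have hsection {p : S → V} :
      p ∈ Fintype.piFinset (fun i : S ↦ {v | c v = i}) ↔ ∀ i, c (p i) = i := by
    simp
  have hinj {p : S → V} (hp : ∀ i, c (p i) = i) : Function.Injective p :=
    fun i j hij ↦ Subtype.ext <| by rw [← hp i, ← hp j, hij]
  symm
  refine card_bij (fun p _ ↦ univ.image p) (fun p hp ↦ ?_) (fun p hp p' hp' h ↦ ?_)
    (fun e he ↦ ?_)
  · rw [hsection] at hp
    simp [card_image_of_injective _ (hinj hp), image_image, Function.comp_def, hp]
  · rw [hsection] at hp hp'
    funext i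
    obtain ⟨j, -, hj⟩ := mem_image.1 (h ▸ mem_image_of_mem p (mem_univ i))
    obtain rfl : j = i := Subtype.ext <| by rw [← hp' j, ← hp i, hj]
    exact hj.symm
  · obtain ⟨hcard, himage⟩ := (mem_filter.1 he).2
    have hlift (i : S) : ∃ v ∈ e, c v = i := mem_image.1 (himage ▸ i.2)
    choose p hpe hp using hlift
    refine ⟨p, hsection.2 hp, eq_of_subset_of_card_le (image_subset_iff.2 fun i _ ↦ hpe i) ?_⟩
    simp [card_image_of_injective _ (hinj hp), hcard]

theorem card_cliqueFinset_comap_top [Fintype ι] [DecidableEq V] (c : V → ι) (r : ℕ)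
    [DecidableRel ((⊤ : SimpleGraph ι).comap c).Adj] :
    #(((⊤ : SimpleGraph ι).comap c).cliqueFinset r) =
      ∑ S ∈ univ.powersetCard r, ∏ i ∈ S, #{v | c v = i} := by
  rw [card_eq_sum_card_fiberwise (f := image c) (t := univ.powersetCard r) fun e he ↦ ?_]
  · refine sum_congr rfl fun S hS ↦ ?_
    rw [← card_filter_image_eq]
    congr 1
    ext e
    simp only [mem_filter, mem_univ, true_and, mem_cliqueFinset_iff, isNClique_comap_top_iff]
    grind
  · simpa using (isNClique_comap_top_iff.1 (mem_cliqueFinset_iff.1 he)).2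

end Coloring

theorem card_filter_ofNat_eq_balancedPart (n q : ℕ) [NeZero q] (i : Fin q) :
    #{v : Fin n | Fin.ofNat q v = i} = balancedPart n q i := by
  have h := Nat.count_modEq_card n (NeZero.pos q) i
  rw [Nat.mod_eq_of_lt i.2, Nat.count_eq_card_filter_range, card_filter,
    ← Fin.sum_univ_eq_sum_range (fun v ↦ if v ≡ i [MOD q] then 1 else 0), ← card_filter] at h
  rw [balancedPart, ← h]
  simp [Nat.ModEq, Fin.ext_iff, Nat.mod_eq_of_lt i.2]

theorem turanGraph_eq_comap_ofNat (n q : ℕ) [NeZero q] :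
    turanGraph n q = (⊤ : SimpleGraph (Fin q)).comap fun v : Fin n ↦ Fin.ofNat q v := by
  ext v w
  simp [turanGraph_adj, Fin.ext_iff]

theorem card_cliqueFinset_turanGraph (n : ℕ) {q : ℕ} (hq : 0 < q) (r : ℕ) :
    #((turanGraph n q).cliqueFinset r) = turanNum n q r := by
  have : NeZero q := ⟨hq.ne'⟩
  simp only [turanGraph_eq_comap_ofNat, card_cliqueFinset_comap_top,
    card_filter_ofNat_eq_balancedPart, turanNum]

end TuranGraph

section Zykov

open Finset SimpleGraph

variable {V : Type*}

theorem isClique_union_setOf_forall_adj {G : SimpleGraph V} {A B : Set V} (hA : G.IsClique A)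
    (hB : G.IsClique B) : G.IsClique (B ∪ {a ∈ A | ∀ b ∈ B, G.Adj b a}) := by
  intro v hv w hw hvw
  rcases hv with hv | hv <;> rcases hw with hw | hw
  · exact hB hv hw hvw
  · exact hw.2 v hv
  · exact (hv.2 w hw).symm
  · exact hA hv.1 hw.1 hvw

variable [Fintype V]

theorem not_cliqueFree_of_maximal_cliqueFree {G : SimpleGraph V} {q : ℕ}
    (hG : Maximal (fun H : SimpleGraph V ↦ H.CliqueFree (q + 1)) G) (hq : q ≤ Fintype.card V) :
    ¬ G.CliqueFree q := by
  intro hfree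
  have hadj (v w : V) (hvw : v ≠ w) : G.Adj v w :=
    hG.le_of_ge (hfree.sup_edge v w) le_sup_left <|
      Or.inr <| (edge_adj ..).2 ⟨Or.inl ⟨rfl, rfl⟩, hvw⟩
  obtain ⟨A, -, hA⟩ := exists_subset_card_eq (s := (univ : Finset V)) hq
  exact hfree A ⟨fun v _ w _ ↦ hadj v w, hA⟩

variable [DecidableEq V] {G : SimpleGraph V} [DecidableRel G.Adj] {A : Finset V} {q : ℕ}

/- Every clique `e` with `e \ A = B` lies between `B` and the clique `W` consisting of `B` and the
common neighbours of `B` in `A`, and `W` has at most `q` vertices. -/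
theorem card_filter_sdiff_eq_le_choose (hG : G.CliqueFree (q + 1)) (hA : G.IsClique A)
    (B : Finset V) (r : ℕ) :
    #{e ∈ G.cliqueFinset r | e \ A = B} ≤ (q - #B).choose (r - #B) := by
  obtain hempty | ⟨e₀, he₀⟩ := {e ∈ G.cliqueFinset r | e \ A = B}.eq_empty_or_nonempty
  · simp [hempty]
  obtain ⟨⟨he₀G, rfl⟩, rfl⟩ := by simpa [isNClique_iff] using he₀
  set B := e₀ \ A
  let W := B ∪ {a ∈ A | ∀ b ∈ B, G.Adj b a}
  have hBG : G.IsClique B := he₀G.subset (mod_cast sdiff_subset)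
  have hWG : G.IsClique W := by
    simpa [W] using isClique_union_setOf_forall_adj hA hBG
  have hWq : #W ≤ q := by
    by_contra! hlt
    exact hG.mono hlt W ⟨hWG, rfl⟩
  have hsub : {e ∈ G.cliqueFinset #e₀ | e \ A = B} ⊆ (W.powersetCard #e₀).filter (B ⊆ ·) := by
    intro e he
    obtain ⟨⟨heG, her⟩, heB⟩ := by simpa [isNClique_iff] using he
    refine mem_filter.2 ⟨mem_powersetCard.2 ⟨fun v hv ↦ ?_, her⟩, heB ▸ sdiff_subset⟩
    by_cases hvA : v ∈ A
    · refine mem_union_right _ (mem_filter.2 ⟨hvA, fun b hb ↦ ?_⟩)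
      rw [← heB, mem_sdiff] at hb
      exact heG hb.1 hv (by grind)
    · exact mem_union_left _ (heB ▸ mem_sdiff.2 ⟨hv, hvA⟩)
  calc #{e ∈ G.cliqueFinset #e₀ | e \ A = B}
      ≤ #((W.powersetCard #e₀).filter (B ⊆ ·)) := card_le_card hsub
    _ = (#W - #B).choose (#e₀ - #B) :=
        card_filter_powersetCard_subset _ _ _ subset_union_left (card_le_card sdiff_subset)
    _ ≤ (q - #B).choose (#e₀ - #B) := Nat.choose_le_choose _ (by gcongr)

theorem card_cliqueFinset_induce (G : SimpleGraph V) [DecidableRel G.Adj] (U : Finset V) (k : ℕ) :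
    #((G.induce U).cliqueFinset k) = #{e ∈ G.cliqueFinset k | e ⊆ U} := by
  have hmap : {e ∈ G.cliqueFinset k | e ⊆ U} =
      ((G.induce U).cliqueFinset k).map ⟨map (.subtype _), map_injective _⟩ := by
    ext e
    simp only [mem_filter, mem_map, mem_cliqueFinset_iff, isNClique_induce_iff]
    constructor
    · rintro ⟨he, heU⟩
      have hsub : (e.subtype (· ∈ (U : Set V))).map (.subtype _) = e := by
        rw [subtype_map]
        exact filter_eq_self.2 fun v hv ↦ heU hv
      exact ⟨e.subtype _, hsub.symm ▸ he, hsub⟩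
    · rintro ⟨e, he, rfl⟩
      exact ⟨he, mod_cast map_subtype_subset e⟩
  rw [hmap, card_map]

theorem card_cliqueFinset_le_sum_induce_compl (hG : G.CliqueFree (q + 1)) (hA : G.IsClique A)
    (r : ℕ) :
    #(G.cliqueFinset r) ≤ ∑ k ∈ range (r + 1),
      #((G.induce (Aᶜ : Finset V)).cliqueFinset k) * (q - k).choose (r - k) := by
  have hcard : ∀ e ∈ G.cliqueFinset r, #(e \ A) ∈ range (r + 1) := fun e he ↦
    mem_range_succ_iff.2 <|
      (card_le_card sdiff_subset).trans_eq (mem_cliqueFinset_iff.1 he).card_eq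
  rw [card_eq_sum_card_fiberwise hcard]
  refine sum_le_sum fun k _ ↦ ?_
  rw [card_cliqueFinset_induce, mul_comm]
  refine card_le_mul_card_image_of_maps_to (f := (· \ A)) (fun e he ↦ ?_) _ fun B hB ↦ ?_
  · obtain ⟨he, hek⟩ := mem_filter.1 he
    have heG : G.IsClique (e \ A : Finset V) :=
      (mem_cliqueFinset_iff.1 he).isClique.subset (mod_cast sdiff_subset)
    exact mem_filter.2
      ⟨mem_cliqueFinset_iff.2 ⟨heG, hek⟩, fun v hv ↦ mem_compl.2 (mem_sdiff.1 hv).2⟩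
  · obtain rfl := (mem_cliqueFinset_iff.1 (mem_filter.1 hB).1).card_eq
    exact (card_le_card (filter_subset_filter _ (filter_subset _ _))).trans
      (card_filter_sdiff_eq_le_choose hG hA B r)

theorem card_cliqueFinset_le_turanNum (hq : 0 < q) (hG : G.CliqueFree (q + 1)) (r : ℕ) :
    #(G.cliqueFinset r) ≤ turanNum (Fintype.card V) q r := by
  classical
  induction hn : Fintype.card V using Nat.strong_induction_on generalizing V r with
  | _ n ih =>
  subst hn
  obtain hlt | hle := lt_or_ge (Fintype.card V) q
  · rw [turanNum_of_lt hlt]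
    exact card_cliqueFinset_le
  obtain ⟨M, hGM, hM⟩ :=
    (Set.toFinite {H : SimpleGraph V | H.CliqueFree (q + 1)}).exists_le_maximal hG
  obtain ⟨A, hAM, hA⟩ : ∃ A, M.IsNClique q A := by
    simpa [CliqueFree] using not_cliqueFree_of_maximal_cliqueFree hM hle
  have hcard : Fintype.card ((Aᶜ : Finset V) : Set V) = Fintype.card V - q := by
    rw [← hA, ← card_compl]
    exact Fintype.card_coe _
  calc #(G.cliqueFinset r)
      ≤ #(M.cliqueFinset r) := card_le_card (cliqueFinset_mono M hGM)
    _ ≤ ∑ k ∈ range (r + 1),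
          #((M.induce (Aᶜ : Finset V)).cliqueFinset k) * (q - k).choose (r - k) :=
        card_cliqueFinset_le_sum_induce_compl hM.prop hAM r
    _ ≤ ∑ k ∈ range (r + 1), turanNum (Fintype.card V - q) q k * (q - k).choose (r - k) := by
        gcongr with k
        exact ih _ (by omega) ((cliqueFree_induce_iff ..).2 hM.prop.cliqueFreeOn) k hcard
    _ = turanNum (Fintype.card V) q r := (turanNum_eq_sum_turanNum_sub hle r).symm

end Zykov

section MubayiFamily

open Finset SimpleGraph

/-- The shadow graph (2-shadow) of a hypergraph `G`: two distinct vertices are adjacent when some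
edge of `G` contains both. Its cliques are the sets that can serve as cores in `G`. -/
def shadowGraph {V : Type*} (G : Finset (Finset V)) : SimpleGraph V where
  Adj v w := v ≠ w ∧ ∃ e ∈ G, v ∈ e ∧ w ∈ e
  symm := ⟨fun _ _ ⟨hne, e, he, hv, hw⟩ ↦ ⟨hne.symm, e, he, hw, hv⟩⟩
  loopless := ⟨fun _ h ↦ h.1 rfl⟩

/-- `G` is `K_ℓ^{(r)}`-free: it contains no copy of a member of Mubayi's family. -/
def MubayiFree {n : ℕ} (ℓ r : ℕ) (G : Finset (Finset (Fin n))) : Prop :=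
  ¬∃ H₀ : Finset (Finset ℕ), ∃ H : Finset (Finset (Fin n)),
    MubayiMember ℓ r H₀ ∧ IsHypCopy H₀ H ∧ H ⊆ G

section ShadowGraph

variable {V : Type*}

theorem isClique_shadowGraph_of_mem {G : Finset (Finset V)} {e : Finset V} (he : e ∈ G) :
    (shadowGraph G).IsClique e :=
  fun _ hv _ hw hvw ↦ ⟨hvw, e, he, hv, hw⟩

theorem subset_cliqueFinset_shadowGraph [Fintype V] [DecidableEq V] {G : Finset (Finset V)} {r : ℕ}
    [DecidableRel (shadowGraph G).Adj] (hG : (G : Set (Finset V)).Sized r) :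
    G ⊆ (shadowGraph G).cliqueFinset r :=
  fun _ he ↦ mem_cliqueFinset_iff.2 ⟨isClique_shadowGraph_of_mem he, hG he⟩

theorem shadowGraph_cliqueFinset_le [Fintype V] [DecidableEq V] (Γ : SimpleGraph V)
    [DecidableRel Γ.Adj] (r : ℕ) : shadowGraph (Γ.cliqueFinset r) ≤ Γ :=
  fun _ _ ⟨hvw, _, he, hv, hw⟩ ↦ (mem_cliqueFinset_iff.1 he).isClique hv hw hvw

theorem exists_subset_card_le_choose_two_isClique {G : Finset (Finset V)} {S : Finset V}
    (hS : (shadowGraph G).IsClique S) :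
    ∃ H ⊆ G, #H ≤ (#S).choose 2 ∧ (shadowGraph H).IsClique S := by
  classical
  have hcover : ∀ P ∈ S.powersetCard 2, ∃ e ∈ G, P ⊆ e := by
    intro P hP
    obtain ⟨hPS, hP2⟩ := mem_powersetCard.1 hP
    obtain ⟨v, w, hvw, rfl⟩ := card_eq_two.1 hP2
    obtain ⟨-, e, he, hv, hw⟩ := hS (hPS (by simp)) (hPS (by simp)) hvw
    exact ⟨e, he, by simp [insert_subset_iff, hv, hw]⟩
  choose! E hEG hPE using hcover
  refine ⟨(S.powersetCard 2).image E, image_subset_iff.2 hEG,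
    card_image_le.trans_eq (card_powersetCard 2 S), fun v hv w hw hvw ↦ ?_⟩
  have hP : {v, w} ∈ S.powersetCard 2 :=
    mem_powersetCard.2 ⟨insert_subset hv (singleton_subset_iff.2 hw), card_pair hvw⟩
  exact ⟨hvw, E {v, w}, mem_image_of_mem E hP, hPE _ hP (by simp), hPE _ hP (by simp)⟩

end ShadowGraph

variable {n ℓ r : ℕ} {G : Finset (Finset (Fin n))}

theorem mubayiFree_of_cliqueFree_shadowGraph (hG : (shadowGraph G).CliqueFree ℓ) :
    MubayiFree ℓ r G := by
  rintro ⟨H₀, _, ⟨-, -, S, hS, hcore⟩, ⟨f, hf, rfl⟩, hHG⟩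
  have hadj : ∀ a ∈ S, ∀ b ∈ S, a ≠ b → (shadowGraph G).Adj (f a) (f b) := by
    intro a ha b hb hab
    obtain ⟨e, he, hae, hbe⟩ := hcore a ha b hb hab
    have hsup : e ⊆ H₀.sup id := le_sup (f := id) he
    exact ⟨hf.ne (hsup hae) (hsup hbe) hab, e.image f, hHG (mem_image_of_mem _ he),
      mem_image_of_mem f hae, mem_image_of_mem f hbe⟩
  have hfS : Set.InjOn f S := fun a ha b hb hab ↦
    by_contra fun hne ↦ (hadj a ha b hb hne).ne hab
  refine hG (S.image f) ⟨?_, (card_image_of_injOn hfS).trans hS⟩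
  rw [coe_image]
  rintro _ ⟨a, ha, rfl⟩ _ ⟨b, hb, rfl⟩ hab
  exact hadj a ha b hb (ne_of_apply_ne f hab)

theorem isHypCopy_image_val [Nonempty (Fin n)] (H : Finset (Finset (Fin n))) :
    IsHypCopy (H.image (image Fin.val)) H := by
  have hinv : Function.LeftInverse (Function.invFun Fin.val) (Fin.val : Fin n → ℕ) :=
    Function.leftInverse_invFun Fin.val_injective
  refine ⟨Function.invFun Fin.val, ?_, ?_⟩
  · refine hinv.rightInvOn_range.injOn.mono fun k hk ↦ ?_
    obtain ⟨e, -, v, -, rfl⟩ : ∃ e ∈ H, ∃ v ∈ e, v.val = k := by simpa [mem_sup] using hk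
    exact Set.mem_range_self v
  · simp [image_image, Function.comp_def, hinv _]

theorem mubayiMember_image_val {H : Finset (Finset (Fin n))} {S : Finset (Fin n)}
    (hr : (H : Set (Finset (Fin n))).Sized r) (hH : #H ≤ (#S).choose 2)
    (hS : (shadowGraph H).IsClique S) :
    MubayiMember #S r (H.image (image Fin.val)) := by
  refine ⟨?_, card_image_le.trans hH, S.image Fin.val, card_image_of_injective S Fin.val_injective,
    ?_⟩
  · simpa [card_image_of_injective _ Fin.val_injective] using fun e he ↦ hr he
  · intro _ ha _ hb hab
    obtain ⟨v, hv, rfl⟩ := mem_image.1 ha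
    obtain ⟨w, hw, rfl⟩ := mem_image.1 hb
    obtain ⟨-, e, he, hve, hwe⟩ := hS hv hw (ne_of_apply_ne Fin.val hab)
    exact ⟨e.image Fin.val, mem_image_of_mem _ he, mem_image_of_mem _ hve, mem_image_of_mem _ hwe⟩

theorem MubayiFree.cliqueFree_shadowGraph (hfree : MubayiFree ℓ r G) (hℓ : 0 < ℓ)
    (hG : (G : Set (Finset (Fin n))).Sized r) : (shadowGraph G).CliqueFree ℓ := by
  rintro S ⟨hS, rfl⟩
  obtain ⟨v, -⟩ := card_pos.1 hℓ
  have : Nonempty (Fin n) := ⟨v⟩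
  obtain ⟨H, hHG, hHcard, hHS⟩ := exists_subset_card_le_choose_two_isClique hS
  exact hfree ⟨_, H, mubayiMember_image_val (hG.mono hHG) hHcard hHS, isHypCopy_image_val H, hHG⟩

end MubayiFamily

/-- Mubayi's hypergraph Turán theorem, `ex(n, K_ℓ^{(r)}) = t_r(n,ℓ-1)`:
the maximum number of edges of a `K_ℓ^{(r)}`-free `r`-graph on `[n]` equals the
number of edges of the complete balanced `(ℓ-1)`-partite `r`-graph. -/
theorem mubayi_turan (n ℓ r : ℕ) (hn : 2 ≤ n) (hℓ : 2 ≤ ℓ) (hr : 2 ≤ r) :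
    IsGreatest
      {m | ∃ G : Finset (Finset (Fin n)),
        G ⊆ Finset.univ.powersetCard r ∧
        (¬∃ H₀ : Finset (Finset ℕ), ∃ H : Finset (Finset (Fin n)),
          MubayiMember ℓ r H₀ ∧ IsHypCopy H₀ H ∧ H ⊆ G) ∧
        m = G.card}
      (turanNum n (ℓ - 1) r) := by
  obtain ⟨q, hq, rfl⟩ : ∃ q, 0 < q ∧ ℓ = q + 1 := ⟨ℓ - 1, by omega, by omega⟩
  rw [Nat.add_sub_cancel]
  constructor
  · refine ⟨(SimpleGraph.turanGraph n q).cliqueFinset r, fun e he ↦ ?_, ?_,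
      (card_cliqueFinset_turanGraph n hq r).symm⟩
    · exact Finset.mem_powersetCard_univ.2 (SimpleGraph.mem_cliqueFinset_iff.1 he).card_eq
    · exact mubayiFree_of_cliqueFree_shadowGraph
        ((SimpleGraph.turanGraph_cliqueFree hq).anti (shadowGraph_cliqueFinset_le _ r))
  · classical
    rintro _ ⟨G, hG, hfree, rfl⟩
    have hsized := Finset.subset_powersetCard_univ_iff.1 hG
    have hclique := MubayiFree.cliqueFree_shadowGraph hfree (by omega) hsized
    calc G.card
        ≤ ((shadowGraph G).cliqueFinset r).card :=
          Finset.card_le_card (subset_cliqueFinset_shadowGraph hsized)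
      _ ≤ turanNum n q r := by
          simpa using card_cliqueFinset_le_turanNum hq hclique r
end
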